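/- Let P be the amalgamated free product of three copies of ℤ/4 along ℤ/2, where in each copy ℤ/2 is embedded as the unique subgroup of order 2 (i.e., P is the pushout in the category of groups of the three inclusions ℤ/2 ↪ ℤ/4). Then for every i > 0, the group homology H_i(P; ℤ) with trivial integer coefficients is isomorphic to ℤ/4 ⊕ ℤ/2 ⊕ ℤ/2 when i is odd, and is zero when i is even. In particular, the abelianization of P is isomorphic to ℤ/4 ⊕ ℤ/2 ⊕ ℤ/2. -/

import Mathlib

/-- The differential `d : Cₙ₊₁ → Cₙ` of the inhomogeneous bar complex computing
the group homology of `P` with trivial `ℤ` coefficients, where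
`Cₙ = (Fin n → P) →₀ ℤ` is the free abelian group on `n`-tuples:
`d(g₁,…,gₙ₊₁) = (g₂,…,gₙ₊₁) + ∑ⱼ (-1)ʲ (g₁,…,gⱼgⱼ₊₁,…,gₙ₊₁)
  + (-1)ⁿ⁺¹ (g₁,…,gₙ)`. -/
noncomputable def barDiff (P : Type*) [Group P] (n : ℕ) :
    ((Fin (n + 1) → P) →₀ ℤ) →ₗ[ℤ] ((Fin n → P) →₀ ℤ) :=
  Finsupp.lift ((Fin n → P) →₀ ℤ) ℤ (Fin (n + 1) → P) fun g =>
    Finsupp.single (fun i => g i.succ) 1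
    + ∑ j : Fin n, ((-1 : ℤ) ^ ((j : ℕ) + 1)) •
        Finsupp.single (fun i : Fin n =>
          if (i : ℕ) < (j : ℕ) then g i.castSucc
          else if (i : ℕ) = (j : ℕ) then g i.castSucc * g i.succ
          else g i.succ) 1
    + ((-1 : ℤ) ^ (n + 1)) • Finsupp.single (fun i : Fin n => g i.castSucc) 1

/-- The group homology `H_{k+1}(P; ℤ)` with trivial integer coefficients,
defined as the `(k+1)`-st homology of the inhomogeneous bar complex:
cycles in degree `k + 1` modulo (the intersection with) boundaries. -/
noncomputable def barHomologySucc (P : Type*) [Group P] (k : ℕ) : Type _ :=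
  ↥(LinearMap.ker (barDiff P k)) ⧸
    Submodule.comap (LinearMap.ker (barDiff P k)).subtype
      (LinearMap.range (barDiff P (k + 1)))

noncomputable instance (P : Type*) [Group P] (k : ℕ) :
    AddCommGroup (barHomologySucc P k) := by
  unfold barHomologySucc; infer_instance

/-- The unique embedding `ℤ/2 ↪ ℤ/4`, sending `1` to `2`. -/
noncomputable def zmodTwoToFour : ZMod 2 →+ ZMod 4 :=
  ZMod.lift 2 ⟨zmultiplesHom (ZMod 4) 2, by decide⟩

/-- The amalgamated free product `P = ℤ/4 *_{ℤ/2} ℤ/4 *_{ℤ/2} ℤ/4` of three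
copies of `ℤ/4` along `ℤ/2`, each embedded as the unique subgroup of order
two; this is `π₁(B(2,Q₈))` for the quaternion group `Q₈`. -/
noncomputable def amalgamThreeZFourAlongZTwo : Type :=
  Monoid.PushoutI
    (fun _ : Fin 3 => AddMonoidHom.toMultiplicative zmodTwoToFour)

noncomputable instance : Group amalgamThreeZFourAlongZTwo := by
  unfold amalgamThreeZFourAlongZTwo; infer_instance

section GroupRing

open MonoidAlgebra

variable {G : Type*} [Group G]

/-- Linear extension of a function on a group to the integral group ring. -/
noncomputable def grLift {M : Type*} [AddCommGroup M] (f : G → M) : MonoidAlgebra ℤ G →ₗ[ℤ] M :=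
  (Finsupp.lift M ℤ G f) ∘ₗ (MonoidAlgebra.coeffLinearEquiv ℤ).toLinearMap

lemma grLift_of {M : Type*} [AddCommGroup M] (f : G → M) (g : G) :
    grLift f (of ℤ G g) = f g := by
  simp [grLift]

lemma gr_ext {M : Type*} [AddCommGroup M] {f f' : MonoidAlgebra ℤ G →+ M}
    (h : ∀ g, f (of ℤ G g) = f' (of ℤ G g)) (x) : f x = f' x := by
  induction x using MonoidAlgebra.induction_on with
  | of g => exact h g
  | add x y hx hy => simp [hx, hy]
  | smul r x hx => rw [map_zsmul, map_zsmul, hx]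

/-- chosen representative of the left coset of `g` modulo the powers of `t`. -/
noncomputable def cosetRep (t g : G) : G := ((g : G ⧸ Subgroup.zpowers t)).out

lemma cosetRep_mul (t g : G) : cosetRep t (g * t) = cosetRep t g := by
  unfold cosetRep
  congr 1
  rw [QuotientGroup.eq]
  simp

lemma cosetRep_mul_pow (t g : G) (i : ℕ) : cosetRep t (g * t ^ i) = cosetRep t g := by
  induction i with
  | zero => simp
  | succ n ih => rw [pow_succ, ← mul_assoc, cosetRep_mul, ih]

lemma cosetRep_idem (t g : G) : cosetRep t (cosetRep t g) = cosetRep t g := by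
  unfold cosetRep
  simp

lemma exists_cosetExp {t : G} (n : ℕ) (hn : 0 < n) (ht : orderOf t = n) (g : G) :
    ∃ i, i < n ∧ cosetRep t g * t ^ i = g := by
  have h : (cosetRep t g)⁻¹ * g ∈ Subgroup.zpowers t := by
    rw [← QuotientGroup.eq]
    simp [cosetRep]
  have hf : IsOfFinOrder t := orderOf_pos_iff.1 (ht ▸ hn)
  classical
  rw [← hf.mem_powers_iff_mem_zpowers, hf.mem_powers_iff_mem_range_orderOf] at h
  simp only [Finset.mem_image, Finset.mem_range] at h
  obtain ⟨i, hi, h⟩ := h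
  exact ⟨i, ht ▸ hi, by rw [h]; simp⟩

/-- exponent -/
noncomputable def cosetExp {t : G} (n : ℕ) (hn : 0 < n) (ht : orderOf t = n) (g : G) : ℕ :=
  (exists_cosetExp n hn ht g).choose

section
variable {t : G} (n : ℕ) (hn : 0 < n) (ht : orderOf t = n)

lemma cosetExp_lt (g : G) : cosetExp n hn ht g < n := (exists_cosetExp n hn ht g).choose_spec.1

lemma cosetExp_spec (g : G) : cosetRep t g * t ^ cosetExp n hn ht g = g :=
  (exists_cosetExp n hn ht g).choose_spec.2

lemma cosetExp_eq (g : G) {i : ℕ} (hi : i < n) (h : cosetRep t g * t ^ i = g) :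
    cosetExp n hn ht g = i := by
  have h2 := cosetExp_spec n hn ht g
  have h3 : t ^ cosetExp n hn ht g = t ^ i := mul_left_cancel (h2.trans h.symm)
  exact pow_injOn_Iio_orderOf (by simpa [ht] using cosetExp_lt n hn ht g) (by simpa [ht] using hi) h3

lemma cosetExp_rep (g : G) {i : ℕ} (hi : i < n) :
    cosetExp n hn ht (cosetRep t g * t ^ i) = i := by
  apply cosetExp_eq n hn ht _ hi
  rw [cosetRep_mul_pow, cosetRep_idem]

lemma cosetExp_mul (g : G) : cosetExp n hn ht (g * t) =
    if cosetExp n hn ht g + 1 < n then cosetExp n hn ht g + 1 else 0 := by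
  have h2 := cosetExp_spec n hn ht g
  have h3 := cosetExp_lt n hn ht g
  split_ifs with h
  · apply cosetExp_eq n hn ht _ h
    rw [cosetRep_mul, pow_succ, ← mul_assoc, h2]
  · apply cosetExp_eq n hn ht _ hn
    have h4 : cosetExp n hn ht g + 1 = n := by omega
    rw [cosetRep_mul]
    conv_rhs => rw [← h2]
    rw [mul_assoc, ← pow_succ, h4, ← ht, pow_orderOf_eq_one, pow_zero]

/-- `x (t-1) = 0` implies `x ∈ R N_t`. -/
lemma exists_of_mul_sub_one_eq_zero {t : G} (n : ℕ) (hn : 0 < n) (ht : orderOf t = n) (x : MonoidAlgebra ℤ G) (hx : x * (of ℤ G t - 1) = 0) :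
    ∃ y, x = y * ∑ i ∈ Finset.range n, (of ℤ G t) ^ i := by
  let D : MonoidAlgebra ℤ G →ₗ[ℤ] MonoidAlgebra ℤ G := grLift fun g =>
    of ℤ G (cosetRep t g) * ∑ i ∈ Finset.range (cosetExp n hn ht g), (of ℤ G t) ^ i
  let E : MonoidAlgebra ℤ G →ₗ[ℤ] MonoidAlgebra ℤ G := grLift fun g =>
    if cosetExp n hn ht g + 1 < n then 0 else of ℤ G (cosetRep t g)
  have key : ∀ x, x = D (x * (of ℤ G t - 1)) + E x * ∑ i ∈ Finset.range n, (of ℤ G t) ^ i := by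
    intro x
    refine gr_ext (f := AddMonoidHom.id _) (f' := (D.toAddMonoidHom.comp (AddMonoidHom.mulRight (of ℤ G t - 1)))
      + (AddMonoidHom.mulRight (∑ i ∈ Finset.range n, (of ℤ G t) ^ i)).comp E.toAddMonoidHom) ?_ x
    intro g
    have h2 := cosetExp_spec n hn ht g
    have h3 := cosetExp_lt n hn ht g
    simp only [AddMonoidHom.id_apply, AddMonoidHom.add_apply, AddMonoidHom.comp_apply,
      AddMonoidHom.coe_mulRight, LinearMap.toAddMonoidHom_coe, mul_sub, mul_one, map_sub]
    rw [← map_mul]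
    simp only [D, E, grLift_of]
    rw [cosetRep_mul, cosetExp_mul]
    have h5 : of ℤ G g = of ℤ G (cosetRep t g) * (of ℤ G t) ^ cosetExp n hn ht g := by
      rw [← map_pow, ← map_mul, h2]
    split_ifs with h
    · rw [Finset.sum_range_succ, mul_add, ← h5]; abel
    · have h4 : cosetExp n hn ht g + 1 = n := by omega
      have h6 : ∑ i ∈ Finset.range n, (of ℤ G t) ^ i =
          ∑ i ∈ Finset.range (cosetExp n hn ht g + 1), (of ℤ G t) ^ i :=
        congrArg (fun m => ∑ i ∈ Finset.range m, (of ℤ G t) ^ i) h4.symm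
      rw [h6, Finset.sum_range_succ, mul_add, ← h5]; simp
  refine ⟨E x, ?_⟩
  have := key x
  rwa [hx, map_zero, zero_add] at this

/-- `x N_t = 0` implies `x ∈ R (t-1)`. -/
lemma exists_of_mul_norm_eq_zero {t : G} (n : ℕ) (hn : 0 < n) (ht : orderOf t = n) (x : MonoidAlgebra ℤ G)
    (hx : x * ∑ i ∈ Finset.range n, (of ℤ G t) ^ i = 0) :
    ∃ y, x = y * (of ℤ G t - 1) := by
  let D : MonoidAlgebra ℤ G →ₗ[ℤ] MonoidAlgebra ℤ G := grLift fun g =>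
    of ℤ G (cosetRep t g) * ∑ i ∈ Finset.range (cosetExp n hn ht g), (of ℤ G t) ^ i
  let K : MonoidAlgebra ℤ G →ₗ[ℤ] MonoidAlgebra ℤ G := grLift fun g =>
    if cosetExp n hn ht g = 0 then of ℤ G (cosetRep t g) else 0
  set N := ∑ i ∈ Finset.range n, (of ℤ G t) ^ i with hN
  have hT : ∀ k : ℕ, of ℤ G t ^ k * N = N := by
    intro k
    have h1 : of ℤ G t * N = N := by
      have := mul_geom_sum (of ℤ G t) n
      rw [← map_pow, ← ht, pow_orderOf_eq_one, map_one, sub_self, ht, sub_mul, one_mul,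
        sub_eq_zero] at this
      exact this
    induction k with
    | zero => simp
    | succ k ih => rw [pow_succ, mul_assoc, h1, ih]
  have key : ∀ x, x = D x * (of ℤ G t - 1) + K (x * N) := by
    intro x
    refine gr_ext (f := AddMonoidHom.id _) (f' := (AddMonoidHom.mulRight (of ℤ G t - 1)).comp D.toAddMonoidHom
      + K.toAddMonoidHom.comp (AddMonoidHom.mulRight N)) ?_ x
    intro g
    have h2 := cosetExp_spec n hn ht g
    have h5 : of ℤ G g = of ℤ G (cosetRep t g) * (of ℤ G t) ^ cosetExp n hn ht g := by
      rw [← map_pow, ← map_mul, h2]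
    simp only [AddMonoidHom.id_apply, AddMonoidHom.add_apply, AddMonoidHom.comp_apply,
      AddMonoidHom.coe_mulRight, LinearMap.toAddMonoidHom_coe]
    have h6 : K (of ℤ G g * N) = of ℤ G (cosetRep t g) := by
      rw [h5, mul_assoc, hT, hN, Finset.mul_sum, map_sum]
      rw [Finset.sum_eq_single_of_mem 0 (by simpa using hn)]
      · rw [pow_zero, mul_one]
        have := cosetExp_rep n hn ht g hn
        rw [pow_zero, mul_one] at this
        simp only [K, grLift_of, this, if_true, cosetRep_idem]
      · intro i hi h0
        rw [← map_pow, ← map_mul]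
        simp only [K, grLift_of]
        rw [cosetExp_rep n hn ht g (by simpa using hi), if_neg h0]
    rw [h6]
    simp only [D, grLift_of]
    rw [mul_assoc, geom_sum_mul, mul_sub, ← h5]
    simp
  refine ⟨D x, ?_⟩
  have := key x
  rwa [hx, map_zero, add_zero] at this

end

end GroupRing

section Amalgam

local notation "PP" => amalgamThreeZFourAlongZTwo

/-- the homomorphism from a cyclic group of order 4 determined by an element -/
noncomputable def zfourHom {K : Type*} [Group K] (k : K) (hk : k ^ 4 = 1) :
    Multiplicative (ZMod 4) →* K :=
  AddMonoidHom.toMultiplicativeLeft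
    (ZMod.lift 4 ⟨zmultiplesHom (Additive K) (Additive.ofMul k), by
      simp only [zmultiplesHom_apply]
      rw [← ofMul_zpow]
      rw [show k ^ ((4 : ℕ) : ℤ) = 1 from by rw [zpow_natCast, hk]]
      rfl⟩)

lemma zfourHom_intCast {K : Type*} [Group K] (k : K) (hk : k ^ 4 = 1) (n : ℤ) :
    zfourHom k hk (Multiplicative.ofAdd (n : ZMod 4)) = k ^ n := by
  simp [zfourHom]

/-- The three generators. -/
noncomputable def gen (i : Fin 3) : PP :=
  Monoid.PushoutI.of (φ := fun _ : Fin 3 => AddMonoidHom.toMultiplicative zmodTwoToFour) i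
    (Multiplicative.ofAdd (1 : ZMod 4))

lemma zmodTwoToFour_one : zmodTwoToFour 1 = 2 := by
  have := ZMod.lift_coe 2 ⟨zmultiplesHom (ZMod 4) 2, by decide⟩ 1
  simpa [zmodTwoToFour] using this

/-- The central element of order two. -/
noncomputable def zgen : PP :=
  Monoid.PushoutI.base (fun _ : Fin 3 => AddMonoidHom.toMultiplicative zmodTwoToFour)
      (Multiplicative.ofAdd (1 : ZMod 2))

lemma gen_sq' (i : Fin 3) : gen i ^ 2 = zgen := by
  unfold zgen
  rw [← Monoid.PushoutI.of_apply_eq_base _ i]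
  unfold gen
  erw [← map_pow]
  have h : (Multiplicative.ofAdd (1 : ZMod 4)) ^ 2 =
      AddMonoidHom.toMultiplicative zmodTwoToFour (Multiplicative.ofAdd (1 : ZMod 2)) := by
    change _ = Multiplicative.ofAdd (zmodTwoToFour 1)
    rw [zmodTwoToFour_one]
    rfl
  rw [h]
  rfl

lemma gen_sq (i j : Fin 3) : gen i ^ 2 = gen j ^ 2 := by
  rw [gen_sq', gen_sq']

lemma gen_pow_four (i : Fin 3) : gen i ^ 4 = 1 := by
  unfold gen
  erw [← map_pow]
  exact map_one _

lemma gen_closure : Subgroup.closure (Set.range gen) = ⊤ := by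
  rw [eq_top_iff]
  rintro x -
  have hgen : ∀ (i : Fin 3) (y : Multiplicative (ZMod 4)),
      (Monoid.PushoutI.of (φ := fun _ : Fin 3 => AddMonoidHom.toMultiplicative zmodTwoToFour) i y : PP)
        ∈ Subgroup.closure (Set.range gen) := by
    intro i y
    have h : y = (Multiplicative.ofAdd (1 : ZMod 4)) ^ (y.toAdd.val) := by
      apply Multiplicative.toAdd.injective
      rw [toAdd_pow]
      simp
    rw [h]
    have : (Monoid.PushoutI.of (φ := fun _ : Fin 3 => AddMonoidHom.toMultiplicative zmodTwoToFour) i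
        ((Multiplicative.ofAdd (1 : ZMod 4)) ^ (y.toAdd.val)) : PP) = gen i ^ (y.toAdd.val) :=
      map_pow _ _ _
    rw [this]
    exact Subgroup.pow_mem _ (Subgroup.subset_closure (Set.mem_range_self i)) _
  refine Monoid.PushoutI.induction_on
    (motive := fun x => (x : PP) ∈ Subgroup.closure (Set.range gen)) x hgen ?_ ?_
  · intro h
    rw [← Monoid.PushoutI.of_apply_eq_base _ (0 : Fin 3)]
    exact hgen _ _
  · intro x y hx hy
    exact Subgroup.mul_mem _ hx hy

lemma exists_lift {K : Type*} [Group K] (k : Fin 3 → K) (h4 : ∀ i, k i ^ 4 = 1)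
    (h2 : ∀ i j, k i ^ 2 = k j ^ 2) : ∃ θ : PP →* K, ∀ i, θ (gen i) = k i := by
  refine ⟨Monoid.PushoutI.lift (fun i => zfourHom (k i) (h4 i))
    ((zfourHom (k 0) (h4 0)).comp (AddMonoidHom.toMultiplicative zmodTwoToFour)) ?_, ?_⟩
  · intro i
    refine MonoidHom.ext fun x => ?_
    obtain ⟨n, hn⟩ := ZMod.intCast_surjective (n := 2) x.toAdd
    have hx : AddMonoidHom.toMultiplicative zmodTwoToFour x
      = Multiplicative.ofAdd ((2 * n : ℤ) : ZMod 4) := by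
      have : zmodTwoToFour (n : ZMod 2) = ((2 * n : ℤ) : ZMod 4) := by
        have := ZMod.lift_coe 2 ⟨zmultiplesHom (ZMod 4) 2, by decide⟩ n
        unfold zmodTwoToFour
        rw [this]
        simp [mul_comm]
      rw [hn] at this
      exact congrArg Multiplicative.ofAdd this
    simp only [MonoidHom.comp_apply]
    rw [hx, zfourHom_intCast, zfourHom_intCast, zpow_mul, zpow_mul]
    congr 1
    exact_mod_cast h2 i 0
  · intro i
    unfold gen
    erw [Monoid.PushoutI.lift_of]
    have := zfourHom_intCast (k i) (h4 i) 1
    simpa using this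

lemma orderOf_gen (i : Fin 3) : orderOf (gen i) = 4 := by
  obtain ⟨θ, hθ⟩ := exists_lift (K := Multiplicative (ZMod 4))
    (fun _ => Multiplicative.ofAdd 1) (by decide) (by decide)
  refine orderOf_eq_prime_pow (p := 2) (n := 1) ?_ (gen_pow_four i)
  intro h
  have := congrArg θ h
  rw [map_pow, hθ, MonoidHom.map_one] at this
  exact absurd this (by decide)

lemma orderOf_gen_sq (i : Fin 3) : orderOf (gen i ^ 2) = 2 := by
  rw [orderOf_pow' _ two_ne_zero, orderOf_gen]; rfl

lemma gen_sq_comm (i : Fin 3) (g : PP) : Commute (gen i ^ 2) g := by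
  have : g ∈ Subgroup.closure (Set.range gen) := by rw [gen_closure]; trivial
  induction this using Subgroup.closure_induction with
  | mem x hx =>
    obtain ⟨j, rfl⟩ := hx
    rw [gen_sq i j]
    exact (Commute.refl _).pow_left 2
  | one => exact Commute.one_right _
  | mul x y _ _ hx hy => exact hx.mul_right hy
  | inv x _ hx => exact hx.inv_right

lemma abelianization_equiv : Nonempty
      (Abelianization PP ≃* Multiplicative (ZMod 4 × ZMod 2 × ZMod 2)) := by
  obtain ⟨θ, hθ⟩ := exists_lift (K := Multiplicative (ZMod 4 × ZMod 2 × ZMod 2))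
    (fun i => Multiplicative.ofAdd (![(1,0,0),(1,1,0),(1,0,1)] i)) (by decide) (by decide)
  let A : Fin 3 → Additive (Abelianization PP) := fun i => Additive.ofMul (Abelianization.of (gen i))
  have hA4 : ∀ i, (4 : ℤ) • A i = 0 := by
    intro i
    change Additive.ofMul ((Abelianization.of (gen i)) ^ (4 : ℤ)) = 0
    rw [← map_zpow]
    have : gen i ^ (4 : ℤ) = 1 := by exact_mod_cast gen_pow_four i
    rw [this]; simp
  have hA2 : ∀ i j, (2 : ℤ) • A i = (2 : ℤ) • A j := by
    intro i j
    change Additive.ofMul ((Abelianization.of (gen i)) ^ (2 : ℤ)) =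
      Additive.ofMul ((Abelianization.of (gen j)) ^ (2 : ℤ))
    rw [← map_zpow, ← map_zpow]
    have : gen i ^ (2 : ℤ) = gen j ^ (2 : ℤ) := by exact_mod_cast gen_sq i j
    rw [this]
  let f1 : ZMod 4 →+ Additive (Abelianization PP) := ZMod.lift 4 ⟨zmultiplesHom _ (A 0), hA4 0⟩
  let f2 : ZMod 2 →+ Additive (Abelianization PP) := ZMod.lift 2 ⟨zmultiplesHom _ (A 1 - A 0), by
    simp only [zmultiplesHom_apply]
    rw [smul_sub]; exact sub_eq_zero.2 (hA2 1 0)⟩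
  let f3 : ZMod 2 →+ Additive (Abelianization PP) := ZMod.lift 2 ⟨zmultiplesHom _ (A 2 - A 0), by
    simp only [zmultiplesHom_apply]
    rw [smul_sub]; exact sub_eq_zero.2 (hA2 2 0)⟩
  have hf1 : f1 1 = A 0 := by
    have := ZMod.lift_coe 4 ⟨zmultiplesHom _ (A 0), hA4 0⟩ 1
    simpa using this
  have hf2 : f2 1 = A 1 - A 0 := by
    have := ZMod.lift_coe 2 ⟨zmultiplesHom _ (A 1 - A 0), by
      simp only [zmultiplesHom_apply]
      rw [smul_sub]; exact sub_eq_zero.2 (hA2 1 0)⟩ 1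
    simpa using this
  have hf3 : f3 1 = A 2 - A 0 := by
    have := ZMod.lift_coe 2 ⟨zmultiplesHom _ (A 2 - A 0), by
      simp only [zmultiplesHom_apply]
      rw [smul_sub]; exact sub_eq_zero.2 (hA2 2 0)⟩ 1
    simpa using this
  let F : ZMod 4 × ZMod 2 × ZMod 2 →+ Additive (Abelianization PP) := f1.coprod (f2.coprod f3)
  let F' : Multiplicative (ZMod 4 × ZMod 2 × ZMod 2) →* Abelianization PP :=
    AddMonoidHom.toMultiplicativeLeft F
  let Θ : Abelianization PP →* Multiplicative (ZMod 4 × ZMod 2 × ZMod 2) := Abelianization.lift θ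
  have h1 : F'.comp Θ = MonoidHom.id _ := by
    apply Abelianization.hom_ext
    apply MonoidHom.eq_of_eqOn_dense gen_closure
    rintro _ ⟨i, rfl⟩
    simp only [Θ, MonoidHom.comp_apply, Abelianization.lift_apply_of, hθ, MonoidHom.id_apply]
    change (F (![(1,0,0),(1,1,0),(1,0,1)] i)).toMul = (A i).toMul
    congr 1
    fin_cases i <;> simp [F, hf1, hf2, hf3]
  have h2 : Θ.comp F' = MonoidHom.id _ := by
    have hΘ : ∀ i, Θ (A i).toMul = Multiplicative.ofAdd (![(1,0,0),(1,1,0),(1,0,1)] i) := by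
      intro i
      exact hθ i
    have e1 : F' (Multiplicative.ofAdd (1,0,0)) = (A 0).toMul := by
      change (F (1,0,0)).toMul = _
      simp [F, hf1]
    have e2 : F' (Multiplicative.ofAdd (0,1,0)) = (A 1).toMul / (A 0).toMul := by
      change (F (0,1,0)).toMul = _
      simp [F, hf2]
    have e3 : F' (Multiplicative.ofAdd (0,0,1)) = (A 2).toMul / (A 0).toMul := by
      change (F (0,0,1)).toMul = _
      simp [F, hf3]
    have gens : ∀ x : Multiplicative (ZMod 4 × ZMod 2 × ZMod 2),
        x = (Multiplicative.ofAdd (1,0,0)) ^ x.toAdd.1.val *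
          (Multiplicative.ofAdd (0,1,0)) ^ x.toAdd.2.1.val *
          (Multiplicative.ofAdd (0,0,1)) ^ x.toAdd.2.2.val := by decide
    refine MonoidHom.ext fun x => ?_
    rw [gens x, MonoidHom.comp_apply, MonoidHom.id_apply]
    simp only [map_mul, map_pow, e1, e2, e3, map_div, hΘ]
    congr 1
  exact ⟨MonoidHom.toMulEquiv Θ F' h1 h2⟩

end Amalgam

section Exactness

open MonoidAlgebra

local notation "PP" => amalgamThreeZFourAlongZTwo
local notation "RR" => MonoidAlgebra ℤ amalgamThreeZFourAlongZTwo

/-- generators in the group ring -/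
noncomputable def TT (i : Fin 3) : RR := of ℤ PP (gen i)

/-- norm elements in the group ring -/
noncomputable def NN (i : Fin 3) : RR := ∑ j ∈ Finset.range 4, TT i ^ j

lemma TT_sq (i j : Fin 3) : TT i ^ 2 = TT j ^ 2 := by
  unfold TT
  rw [← map_pow, ← map_pow, gen_sq i j]

lemma TT_four (i : Fin 3) : TT i ^ 4 = 1 := by
  unfold TT
  rw [← map_pow, gen_pow_four, map_one]

lemma TT_sq_comm (i : Fin 3) (x : RR) : TT i ^ 2 * x = x * TT i ^ 2 := by
  refine gr_ext (f := AddMonoidHom.mulLeft (TT i ^ 2)) (f' := AddMonoidHom.mulRight (TT i ^ 2)) ?_ x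
  intro g
  simp only [AddMonoidHom.coe_mulLeft, AddMonoidHom.coe_mulRight]
  unfold TT
  rw [← map_pow, ← map_mul, ← map_mul, (gen_sq_comm i g).eq]

lemma exists_deriv {M : Type} [AddCommGroup M] [Module RR M] (m : Fin 3 → M)
    (h4 : ∀ i, NN i • m i = 0) (h2 : ∀ i j, (1 + TT i) • m i = (1 + TT j) • m j) :
    ∃ δ : PP → M, (∀ g h, δ (g * h) = δ g + of ℤ PP g • δ h) ∧ ∀ i, δ (gen i) = m i := by
  have hinv : ∀ (g : PP) (x : M), of ℤ PP g⁻¹ • of ℤ PP g • x = x := by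
    intro g x
    rw [smul_smul, ← map_mul, inv_mul_cancel, map_one, one_smul]
  have hinv' : ∀ (g : PP) (x : M), of ℤ PP g • of ℤ PP g⁻¹ • x = x := by
    intro g x
    rw [smul_smul, ← map_mul, mul_inv_cancel, map_one, one_smul]
  let k : Fin 3 → Equiv.Perm M := fun i =>
    { toFun := fun x => m i + TT i • x
      invFun := fun x => of ℤ PP (gen i)⁻¹ • (x - m i)
      left_inv := fun x => by simp only [add_sub_cancel_left]; exact hinv _ _
      right_inv := fun x => by
        simp only [TT]
        rw [hinv']; abel }
  have hk : ∀ i x, k i x = m i + TT i • x := fun i x => rfl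
  have hk2 : ∀ i x, (k i ^ 2) x = (1 + TT i) • m i + TT i ^ 2 • x := by
    intro i x
    rw [pow_two, Equiv.Perm.mul_apply, hk, hk, smul_add, smul_smul, ← pow_two, add_smul, one_smul]
    abel
  obtain ⟨θ, hθ⟩ := exists_lift k (by
    intro i
    ext x
    rw [show 4 = 2 + 2 from rfl, pow_add, Equiv.Perm.mul_apply, hk2, hk2, smul_add, smul_smul,
      smul_smul, ← add_assoc, ← add_smul, ← pow_add, TT_four, one_smul, Equiv.Perm.one_apply]
    have : 1 + TT i + TT i ^ 2 * (1 + TT i) = NN i := by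
      simp only [NN, Finset.sum_range_succ, Finset.sum_range_zero]
      noncomm_ring
    rw [this, h4, zero_add]) (by
    intro i j
    ext x
    rw [hk2, hk2, h2 i j, TT_sq i j])
  have hlin : ∀ g x, θ g x = θ g 0 + of ℤ PP g • x := by
    intro g
    have : g ∈ Subgroup.closure (Set.range gen) := by rw [gen_closure]; trivial
    induction this using Subgroup.closure_induction with
    | mem x hx =>
      obtain ⟨j, rfl⟩ := hx
      intro x
      rw [hθ, hk, hk]
      simp [TT]
    | one => intro x; rw [map_one, map_one, one_smul]; simp
    | mul g h _ _ hg hh =>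
      intro x
      rw [map_mul, map_mul, Equiv.Perm.mul_apply, Equiv.Perm.mul_apply, hh, hg, hg (θ h 0),
        smul_add, smul_smul, add_assoc]
    | inv g _ hg =>
      intro x
      rw [map_inv, Equiv.Perm.inv_eq_iff_eq, hg, smul_add, hinv', ← add_assoc, ← hg]
      simp
  refine ⟨fun g => θ g 0, ?_, ?_⟩
  · intro g h
    simp only
    rw [map_mul, Equiv.Perm.mul_apply, hlin]
  · intro i
    simp only
    rw [hθ, hk, smul_zero, add_zero]

/-- Exactness in degree one. -/
lemma fox (x : Fin 3 → RR) (h : x 0 * (TT 0 - 1) + x 1 * (TT 1 - 1) + x 2 * (TT 2 - 1) = 0) :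
    ∃ p q r : RR, x 0 = p * NN 0 + q * (1 + TT 0) + r * (1 + TT 0) ∧
      x 1 = - (q * (1 + TT 1)) ∧ x 2 = - (r * (1 + TT 2)) := by
  let S : Submodule RR (Fin 3 → RR) := Submodule.span RR
    {![NN 0, 0, 0], ![1 + TT 0, -(1 + TT 1), 0], ![1 + TT 0, 0, -(1 + TT 2)]}
  have hS0 : ![NN 0, 0, 0] ∈ S := Submodule.subset_span (by simp)
  have hS1 : ![1 + TT 0, -(1 + TT 1), 0] ∈ S := Submodule.subset_span (by simp)
  have hS2 : ![1 + TT 0, 0, -(1 + TT 2)] ∈ S := Submodule.subset_span (by simp)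
  let m : Fin 3 → (Fin 3 → RR) ⧸ S := fun i => S.mkQ (Pi.single i 1)
  have e01 : (1 + TT 0) • m 0 = (1 + TT 1) • m 1 := by
    simp only [m, ← map_smul]
    rw [← sub_eq_zero, ← map_sub, Submodule.mkQ_apply, Submodule.Quotient.mk_eq_zero]
    convert hS1 using 1
    ext i; fin_cases i <;> simp
  have e02 : (1 + TT 0) • m 0 = (1 + TT 2) • m 2 := by
    simp only [m, ← map_smul]
    rw [← sub_eq_zero, ← map_sub, Submodule.mkQ_apply, Submodule.Quotient.mk_eq_zero]
    convert hS2 using 1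
    ext i; fin_cases i <;> simp
  have e2 : ∀ i, (1 + TT i) • m i = (1 + TT 0) • m 0 := by
    intro i
    fin_cases i
    · rfl
    · exact e01.symm
    · exact e02.symm
  have hN : ∀ i, NN i = (1 + TT i ^ 2) * (1 + TT i) := by
    intro i
    simp only [NN, Finset.sum_range_succ, Finset.sum_range_zero]
    noncomm_ring
  have e0 : NN 0 • m 0 = 0 := by
    simp only [m, ← map_smul]
    rw [Submodule.mkQ_apply, Submodule.Quotient.mk_eq_zero]
    convert hS0 using 1
    ext i; fin_cases i <;> simp
  obtain ⟨δ, hδ, hδg⟩ := exists_deriv m (by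
    intro i
    rw [hN, mul_smul, e2, TT_sq i 0, ← mul_smul, ← hN, e0]) (by
    intro i j
    rw [e2 i, e2 j])
  let Δ : RR →ₗ[ℤ] _ := grLift δ
  have hΔ : ∀ (y : RR) (i : Fin 3), Δ (y * (TT i - 1)) = y • m i := by
    intro y i
    refine gr_ext (f := Δ.toAddMonoidHom.comp (AddMonoidHom.mulRight (TT i - 1)))
      (f' := AddMonoidHom.flip (smulAddHom RR _) (m i)) ?_ y
    intro g
    simp only [AddMonoidHom.comp_apply, AddMonoidHom.coe_mulRight, LinearMap.toAddMonoidHom_coe,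
      AddMonoidHom.flip_apply, smulAddHom_apply, mul_sub, mul_one, map_sub]
    simp only [TT]
    rw [← map_mul]
    simp only [Δ, grLift_of]
    rw [hδ, hδg]; abel
  have h1 := congrArg Δ h
  rw [map_add, map_add, hΔ, hΔ, hΔ, map_zero] at h1
  simp only [m, ← map_smul, ← map_add] at h1
  rw [Submodule.mkQ_apply, Submodule.Quotient.mk_eq_zero] at h1
  have h2 : x ∈ S := by
    convert h1 using 1
    ext i; fin_cases i <;> simp
  rw [Submodule.mem_span_triple] at h2
  obtain ⟨p, q, r, rfl⟩ := h2
  exact ⟨p, q, r, by simp, by simp [mul_add, add_comm], by simp [mul_add, add_comm]⟩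

lemma one_add_ann (i : Fin 3) (q : RR) (h : q * (1 + TT i) = 0) :
    ∃ y, q = y * (TT i - 1) * (1 + TT i ^ 2) := by
  obtain ⟨q', rfl⟩ := exists_of_mul_norm_eq_zero 4 (by norm_num) (orderOf_gen i) q (by
    change q * NN i = 0
    have : NN i = (1 + TT i) * (1 + TT i ^ 2) := by
      simp only [NN, Finset.sum_range_succ, Finset.sum_range_zero]
      noncomm_ring
    rw [this, ← mul_assoc, h, zero_mul])
  change q' * (TT i - 1) * (1 + TT i) = 0 at h
  obtain ⟨y, rfl⟩ := exists_of_mul_sub_one_eq_zero 2 (by norm_num) (orderOf_gen_sq i) q' (by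
    rw [map_pow]
    change q' * (TT i ^ 2 - 1) = 0
    rw [← h]; noncomm_ring)
  refine ⟨y, ?_⟩
  change y * (∑ j ∈ Finset.range 2, (of ℤ PP (gen i ^ 2)) ^ j) * (TT i - 1) = _
  rw [map_pow]
  change y * (∑ j ∈ Finset.range 2, (TT i ^ 2) ^ j) * (TT i - 1) = _
  simp only [Finset.sum_range_succ, Finset.sum_range_zero]
  noncomm_ring

/-- Exactness in even degrees. -/
lemma exact_even (p q r : RR) (h0 : p * NN 0 + q * (1 + TT 0) + r * (1 + TT 0) = 0)
    (h1 : q * (1 + TT 1) = 0) (h2 : r * (1 + TT 2) = 0) :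
    ∃ x y w : RR, p = x * (TT 0 - 1) + y * (TT 1 - 1) + w * (TT 2 - 1) ∧
      q = - (y * (TT 1 - 1) * (1 + TT 0 ^ 2)) ∧ r = - (w * (TT 2 - 1) * (1 + TT 0 ^ 2)) := by
  obtain ⟨y, hy⟩ := one_add_ann 1 q h1
  obtain ⟨w, hw⟩ := one_add_ann 2 r h2
  rw [TT_sq 1 0] at hy
  rw [TT_sq 2 0] at hw
  have hN : NN 0 = (1 + TT 0 ^ 2) * (1 + TT 0) := by
    simp only [NN, Finset.sum_range_succ, Finset.sum_range_zero]
    noncomm_ring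
  obtain ⟨x, hx⟩ := exists_of_mul_norm_eq_zero 4 (by norm_num) (orderOf_gen 0)
    (p + y * (TT 1 - 1) + w * (TT 2 - 1)) (by
      change (p + y * (TT 1 - 1) + w * (TT 2 - 1)) * NN 0 = 0
      rw [← h0, hy, hw, add_mul, add_mul, hN]
      simp only [mul_assoc])
  change _ = x * (TT 0 - 1) at hx
  refine ⟨x, -y, -w, ?_, ?_, ?_⟩
  · rw [← hx]; noncomm_ring
  · rw [hy]; noncomm_ring
  · rw [hw]; noncomm_ring

/-- Exactness in degree zero. -/
lemma exact_zero (x : RR) (h : grLift (fun _ => (1 : ℤ)) x = 0) :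
    ∃ y : Fin 3 → RR, x = y 0 * (TT 0 - 1) + y 1 * (TT 1 - 1) + y 2 * (TT 2 - 1) := by
  let J : Submodule RR RR := Submodule.span RR {TT 0 - 1, TT 1 - 1, TT 2 - 1}
  have hJ : ∀ i, TT i - 1 ∈ J := by
    intro i
    apply Submodule.subset_span
    fin_cases i <;> simp
  have hg : ∀ g : PP, of ℤ PP g - 1 ∈ J := by
    intro g
    have : g ∈ Subgroup.closure (Set.range gen) := by rw [gen_closure]; trivial
    induction this using Subgroup.closure_induction with
    | mem x hx => obtain ⟨i, rfl⟩ := hx; exact hJ i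
    | one => rw [map_one, sub_self]; exact J.zero_mem
    | mul g h _ _ hg hh =>
      have : of ℤ PP (g * h) - 1 = of ℤ PP g • (of ℤ PP h - 1) + (of ℤ PP g - 1) := by
        rw [map_mul, smul_eq_mul]; noncomm_ring
      rw [this]
      exact J.add_mem (J.smul_mem _ hh) hg
    | inv g _ hg =>
      have : of ℤ PP (g⁻¹) - 1 = - (of ℤ PP g⁻¹ • (of ℤ PP g - 1)) := by
        rw [smul_eq_mul, mul_sub, ← map_mul, inv_mul_cancel, map_one, mul_one]; abel
      rw [this]
      exact J.neg_mem (J.smul_mem _ hg)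
  have key : ∀ x : RR, x - (grLift (fun _ => (1 : ℤ)) x) • (1 : RR) ∈ J := by
    intro x
    induction x using MonoidAlgebra.induction_on with
    | of g => rw [grLift_of, one_smul]; exact hg g
    | add x y hx hy =>
      rw [map_add, add_smul, add_sub_add_comm]
      exact J.add_mem hx hy
    | smul n x hx =>
      rw [map_smul, smul_assoc, ← smul_sub]
      exact zsmul_mem hx n
  have h3 := key x
  rw [h, zero_smul, sub_zero, Submodule.mem_span_triple] at h3
  obtain ⟨p, q, r, rfl⟩ := h3
  exact ⟨![p, q, r], by simp⟩

end Exactness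

section BarComparison
open CategoryTheory

/-- Homology in positive degree of a complex of modules, as cycles modulo boundaries. -/
noncomputable def homologySuccEquiv {R : Type} [CommRing R]
    (K : ChainComplex (ModuleCat.{0} R) ℕ) (n : ℕ) :
    K.homology (n + 1) ≃ₗ[R] (↥(LinearMap.ker (K.d (n + 1) n).hom) ⧸
      Submodule.comap (LinearMap.ker (K.d (n + 1) n).hom).subtype
        (LinearMap.range (K.d (n + 2) (n + 1)).hom)) :=
  ((K.homologyIsoSc' (n + 2) (n + 1) n (by simp) (by simp)) ≪≫
    (K.sc' (n + 2) (n + 1) n).moduleCatHomologyIso).toLinearEquiv ≪≫ₗ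
    Submodule.quotEquivOfEq _ _ (by
      ext x
      constructor
      · rintro ⟨y, rfl⟩
        exact ⟨y, rfl⟩
      · rintro ⟨y, hy⟩
        exact ⟨y, Subtype.ext hy⟩)

lemma barDiff_eq (P : Type) [Group P] (n : ℕ) :
    barDiff P n = (groupHomology.inhomogeneousChains.d (Rep.trivial ℤ P ℤ) n).hom := by
  apply Finsupp.lhom_ext
  intro g a
  have h := groupHomology.inhomogeneousChains.d_single (A := Rep.trivial ℤ P ℤ) n g a
  refine Eq.trans ?_ h.symm
  rw [Fin.sum_univ_castSucc]
  have hs : ∀ (f : Fin n → P), Finsupp.single f a = a • Finsupp.single f (1 : ℤ) := by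
    intro f; simp
  have h1 : ∀ j : Fin n, Fin.contractNth j.castSucc (· * ·) g = (fun i : Fin n =>
          if (i : ℕ) < (j : ℕ) then g i.castSucc
          else if (i : ℕ) = (j : ℕ) then g i.castSucc * g i.succ
          else g i.succ) := by
    intro j; ext i; simp [Fin.contractNth]
  have h2 : Fin.contractNth (Fin.last n) (· * ·) g = (fun i : Fin n => g i.castSucc) := by
    ext i; simp [Fin.contractNth]
  simp only [h1, h2]
  change barDiff P n (Finsupp.single g a) = Finsupp.single (fun i : Fin n => g i.succ) a + _
  simp only [hs]
  rw [barDiff, Finsupp.lift_apply, Finsupp.sum_single_index (by rw [zero_smul])]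
  simp only [smul_add, Finset.smul_sum, add_assoc, Fin.val_castSucc, Fin.val_last]
  simp only [smul_smul, mul_comm a]

/-- Equal differentials give isomorphic homology. -/
noncomputable def kerQuotEquiv {R A B C : Type} [CommRing R] [AddCommGroup A] [AddCommGroup B]
    [AddCommGroup C] [Module R A] [Module R B] [Module R C] (f f' : B →ₗ[R] C)
    (g g' : A →ₗ[R] B) (hf : f = f') (hg : g = g') :
    (↥(LinearMap.ker f) ⧸ Submodule.comap (LinearMap.ker f).subtype (LinearMap.range g)) ≃+
    (↥(LinearMap.ker f') ⧸ Submodule.comap (LinearMap.ker f').subtype (LinearMap.range g')) := by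
  subst hf hg
  exact AddEquiv.refl _

/-- The bar homology is Mathlib's group homology. -/
noncomputable def barHomologySuccEquiv (P : Type) [Group P] (k : ℕ) :
    barHomologySucc P k ≃+ groupHomology (Rep.trivial ℤ P ℤ) (k + 1) :=
  AddEquiv.trans (kerQuotEquiv _ _ _ _
      ((barDiff_eq P k).trans (congrArg ModuleCat.Hom.hom
        (groupHomology.inhomogeneousChains.d_def (Rep.trivial ℤ P ℤ) k).symm))
      ((barDiff_eq P (k + 1)).trans (congrArg ModuleCat.Hom.hom
        (groupHomology.inhomogeneousChains.d_def (Rep.trivial ℤ P ℤ) (k + 1)).symm)))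
    (homologySuccEquiv (groupHomology.inhomogeneousChains (Rep.trivial ℤ P ℤ)) k).symm.toAddEquiv

end BarComparison

section FreeMaps
open CategoryTheory MonoidalCategory Representation

variable {G : Type} [Group G] {α β γ : Type} [Fintype α] [Fintype β] [Fintype γ]

/-- The map of free modules given by right multiplication by a matrix. -/
noncomputable def matMap (m : α → β → MonoidAlgebra ℤ G) :
    Rep.free ℤ G α ⟶ Rep.free ℤ G β :=
  Rep.freeLift ℤ G (Rep.free ℤ G β) fun a => Finsupp.equivFunOnFinite.symm (m a)

lemma free_apply_apply (g : G) (y : α →₀ MonoidAlgebra ℤ G) (a : α) :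
    (free ℤ G α g y) a = MonoidAlgebra.single g 1 * y a := by
  classical
  induction y using Finsupp.induction_linear with
  | zero => simp
  | add x y hx hy => simp only [map_add, Finsupp.add_apply, mul_add, ← hx, ← hy]
  | single a' r =>
    induction r using MonoidAlgebra.induction_linear with
    | zero => simp
    | add x y hx hy =>
      simp only [Finsupp.single_add, map_add, Finsupp.add_apply, mul_add, ← hx, ← hy]
    | single h n =>
      rw [free_single_single, Finsupp.single_apply, Finsupp.single_apply]
      split_ifs <;> simp [MonoidAlgebra.single_mul_single]

lemma matMap_apply (m : α → β → MonoidAlgebra ℤ G) (x : α →₀ MonoidAlgebra ℤ G) (b : β) :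
    ((matMap m).hom x : β →₀ MonoidAlgebra ℤ G) b = ∑ a, x a * m a b := by
  classical
  induction x using Finsupp.induction_linear with
  | zero => simp
  | add x y hx hy =>
    simp only [map_add, Finsupp.add_apply, add_mul, Finset.sum_add_distrib, ← hx, ← hy]
  | single a r =>
    rw [Finset.sum_eq_single a (by intro c _ hc; rw [Finsupp.single_eq_of_ne hc]; simp) (by simp)]
    rw [Finsupp.single_eq_same]
    induction r using MonoidAlgebra.induction_linear with
    | zero => simp
    | add x y hx hy => 
      simp only [Finsupp.single_add, map_add, Finsupp.add_apply, add_mul, ← hx, ← hy]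
    | single g n =>
      have := Representation.freeLift_single_single (σ := (Rep.free ℤ G β).ρ) a g n
        (fun a => Finsupp.equivFunOnFinite.symm (m a))
      refine (DFunLike.congr_fun this b).trans ?_
      change (n • (free ℤ G β g) (Finsupp.equivFunOnFinite.symm (m a))) b = _
      rw [Finsupp.smul_apply, free_apply_apply]
      rw [Finsupp.equivFunOnFinite_symm_apply_apply, ← smul_mul_assoc]
      simp

lemma toFinsupp_mk (c : ℤ) (y : α →₀ MonoidAlgebra ℤ G) (a : α) [DecidableEq α] :
    (Rep.coinvariantsTensorFreeToFinsupp (Rep.trivial ℤ G ℤ) α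
      (Representation.Coinvariants.mk _ (c ⊗ₜ[ℤ] y)) : α →₀ ℤ) a = c * grLift (fun _ => (1 : ℤ)) (y a) := by
  induction y using Finsupp.induction_linear with
  | zero => simp
  | add x y hx hy =>
    simp only [TensorProduct.tmul_add, map_add, Finsupp.add_apply, mul_add, ← hx, ← hy]
  | single a' r =>
    induction r using MonoidAlgebra.induction_linear with
    | zero => simp
    | add x y hx hy => 
      simp only [Finsupp.single_add, TensorProduct.tmul_add, map_add, Finsupp.add_apply, mul_add, ← hx, ← hy]
    | single g n =>
      have := Rep.coinvariantsTensorFreeToFinsupp_mk_tmul_single (Rep.trivial ℤ G ℤ) c a' g n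
      refine (DFunLike.congr_fun this a).trans ?_
      change (Finsupp.single a' (n • c) : α →₀ ℤ) a = _
      rw [Finsupp.single_apply, Finsupp.single_apply]
      split_ifs
      · simp [grLift, mul_comm]
      · simp

lemma coinv_matMap [DecidableEq α] [DecidableEq β] (m : α → β → MonoidAlgebra ℤ G) (x : Coinvariants (Rep.trivial ℤ G ℤ ⊗ Rep.free ℤ G α).ρ) (b : β) : 
  (Rep.coinvariantsTensorFreeToFinsupp (Rep.trivial ℤ G ℤ) β ((((Rep.coinvariantsTensor ℤ G).obj (Rep.trivial ℤ G ℤ)).map (matMap m)).hom x) : β →₀ ℤ) b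
  = ∑ a, (Rep.coinvariantsTensorFreeToFinsupp (Rep.trivial ℤ G ℤ) α x : α →₀ ℤ) a * grLift (fun _ => (1 : ℤ)) (m a b) := by
  obtain ⟨y, rfl⟩ := (Rep.coinvariantsTensorFreeLEquiv (Rep.trivial ℤ G ℤ) α).symm.surjective x
  rw [show Rep.coinvariantsTensorFreeToFinsupp (Rep.trivial ℤ G ℤ) α ((Rep.coinvariantsTensorFreeLEquiv (Rep.trivial ℤ G ℤ) α).symm y) = y from
      LinearEquiv.apply_symm_apply (Rep.coinvariantsTensorFreeLEquiv (Rep.trivial ℤ G ℤ) α) y]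
  induction y using Finsupp.induction_linear with
  | zero => simp
  | add x y hx hy =>
    simp only [map_add, Finsupp.add_apply, add_mul, Finset.sum_add_distrib, ← hx, ← hy]
  | single a c =>
    have h1 : (Rep.coinvariantsTensorFreeLEquiv (Rep.trivial ℤ G ℤ) α).symm (Finsupp.single a c) = _ := Rep.finsuppToCoinvariantsTensorFree_single (A := Rep.trivial ℤ G ℤ) a c
    rw [h1]
    refine (toFinsupp_mk c ((matMap m).hom _) b).trans ?_
    rw [matMap_apply]
    rw [Finset.sum_eq_single a (by intro c _ hc; rw [Finsupp.single_eq_of_ne hc]; simp) (by simp),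
      Finset.sum_eq_single a (by intro c _ hc; rw [Finsupp.single_eq_of_ne hc]; simp) (by simp)]
    rw [Finsupp.single_eq_same, Finsupp.single_eq_same, ← MonoidAlgebra.one_def, one_mul]

end FreeMaps

section Resolution
open CategoryTheory MonoidalCategory Representation

local notation "PP" => amalgamThreeZFourAlongZTwo
local notation "RR" => MonoidAlgebra ℤ amalgamThreeZFourAlongZTwo

noncomputable def mOne : Fin 3 → Unit → RR := fun i _ => TT i - 1

noncomputable def mEven : Fin 3 → Fin 3 → RR :=
  ![![NN 0, 0, 0], ![1 + TT 0, -(1 + TT 1), 0], ![1 + TT 0, 0, -(1 + TT 2)]]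

noncomputable def mOdd : Fin 3 → Fin 3 → RR :=
  ![![TT 0 - 1, 0, 0], ![TT 1 - 1, -((TT 1 - 1) * (1 + TT 0 ^ 2)), 0],
    ![TT 2 - 1, 0, -((TT 2 - 1) * (1 + TT 0 ^ 2))]]

lemma mul_comp_zero {α β γ : Type} [Fintype α] [Fintype β] [Fintype γ]
    (m : α → β → RR) (m' : β → γ → RR) (h : ∀ a c, ∑ b, m a b * m' b c = 0) :
    matMap m ≫ matMap m' = 0 := by
  apply Rep.hom_ext
  refine Representation.IntertwiningMap.ext (LinearMap.ext fun x => ?_)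
  apply Finsupp.ext
  intro c
  change ((matMap m').hom ((matMap m).hom x) : γ →₀ RR) c = 0
  rw [matMap_apply]
  rw [Finset.sum_congr rfl (fun b _ => congrArg (· * m' b c) (matMap_apply m x b))]
  simp only [Finset.sum_mul, mul_assoc]
  rw [Finset.sum_comm]
  simp only [← Finset.mul_sum, h, mul_zero, Finset.sum_const_zero]

lemma one_add_TT_mul (i : Fin 3) : (1 + TT i) * (TT i - 1) = TT 0 ^ 2 - 1 := by
  rw [← TT_sq i 0]; noncomm_ring

lemma TT_mul_one_add (i : Fin 3) : (TT i - 1) * (1 + TT i) = TT 0 ^ 2 - 1 := by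
  rw [← TT_sq i 0]; noncomm_ring

lemma zz_mul : (TT 0 ^ 2 - 1) * (1 + TT 0 ^ 2) = 0 := by
  have h := TT_four 0
  have : (TT 0 ^ 2 - 1) * (1 + TT 0 ^ 2) = TT 0 ^ 4 - 1 := by noncomm_ring
  rw [this, h, sub_self]

lemma NN_eq : NN 0 = (1 + TT 0 ^ 2) * (1 + TT 0) := by
  simp only [NN, Finset.sum_range_succ, Finset.sum_range_zero]
  noncomm_ring

lemma one_add_comm (x : RR) : (1 + TT 0 ^ 2) * x = x * (1 + TT 0 ^ 2) := by
  rw [add_mul, mul_add, TT_sq_comm, one_mul, mul_one]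

lemma NN_mul : NN 0 * (TT 0 - 1) = 0 := by
  rw [NN_eq, mul_assoc, one_add_TT_mul, one_add_comm, zz_mul]

lemma mul_NN : (TT 0 - 1) * NN 0 = 0 := by
  rw [NN_eq, one_add_comm, ← mul_assoc, TT_mul_one_add, zz_mul]

lemma comp_EO : matMap mEven ≫ matMap mOdd = 0 := by
  apply mul_comp_zero
  intro a c
  fin_cases a <;> fin_cases c <;> simp [mEven, mOdd, Fin.sum_univ_three, NN_mul, one_add_TT_mul,
    ← mul_assoc, -neg_add_rev]
  all_goals
    rw [← neg_sub, neg_mul, zz_mul, neg_zero]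

lemma comp_OE : matMap mOdd ≫ matMap mEven = 0 := by
  apply mul_comp_zero
  intro a c
  fin_cases a <;> fin_cases c <;> simp [mEven, mOdd, Fin.sum_univ_three, mul_NN,
    -neg_add_rev]
  · rw [NN_eq]; noncomm_ring
  · rw [mul_assoc, one_add_comm, ← mul_assoc, TT_mul_one_add, zz_mul]
  · rw [NN_eq]; noncomm_ring
  · rw [mul_assoc, one_add_comm, ← mul_assoc, TT_mul_one_add, zz_mul]

lemma comp_E1 : matMap mEven ≫ matMap mOne = 0 := by
  apply mul_comp_zero
  intro a c
  fin_cases a <;> fin_cases c <;> simp [mEven, mOne, Fin.sum_univ_three, NN_mul, one_add_TT_mul,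
    -neg_add_rev]

/-- terms of the resolution -/
noncomputable def resX : ℕ → Rep ℤ PP
  | 0 => Rep.free ℤ PP Unit
  | _ + 1 => Rep.free ℤ PP (Fin 3)

/-- differentials of the resolution in even and odd positions -/
noncomputable def mPar (n : ℕ) : Rep.free ℤ PP (Fin 3) ⟶ Rep.free ℤ PP (Fin 3) :=
  if Even n then matMap mEven else matMap mOdd

lemma mPar_even {n : ℕ} (h : Even n) : mPar n = matMap mEven := if_pos h

lemma mPar_odd {n : ℕ} (h : ¬ Even n) : mPar n = matMap mOdd := if_neg h

/-- differentials of the resolution -/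
noncomputable def resd : ∀ n, resX (n + 1) ⟶ resX n
  | 0 => matMap mOne
  | n + 1 => mPar n

lemma mPar_comp (n : ℕ) : mPar (n + 1) ≫ mPar n = 0 := by
  by_cases h : Even n
  · have h' : ¬ Even (n + 1) := by simpa [Nat.even_add_one] using h
    rw [mPar_even h, mPar_odd h', comp_OE]
  · have h' : Even (n + 1) := by simpa [Nat.even_add_one] using h
    rw [mPar_even h', mPar_odd h, comp_EO]

lemma resd_comp : ∀ n, resd (n + 1) ≫ resd n = 0
  | 0 => by
    change mPar 0 ≫ matMap mOne = 0
    rw [mPar_even (by simp), comp_E1]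
  | n + 1 => mPar_comp n

/-- the resolution -/
noncomputable def resC : ChainComplex (Rep ℤ PP) ℕ := ChainComplex.of resX resd resd_comp

noncomputable def aug : Rep.free ℤ PP Unit ⟶ Rep.trivial ℤ PP ℤ :=
  Rep.freeLift ℤ PP (Rep.trivial ℤ PP ℤ) fun _ => (1 : ℤ)

lemma aug_apply (x : Unit →₀ RR) : (aug.hom x : ℤ) = grLift (fun _ => (1 : ℤ)) (x ()) := by
  induction x using Finsupp.induction_linear with
  | zero => simp
  | add x y hx hy => rw [map_add (f := aug.hom), hx, hy, Finsupp.add_apply, map_add (grLift _)]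
  | single a r =>
    rw [Finsupp.single_eq_same]
    induction r using MonoidAlgebra.induction_linear with
    | zero => simp
    | add x y hx hy => rw [Finsupp.single_add, map_add (f := aug.hom), hx, hy, map_add]
    | single g n =>
      have := Representation.freeLift_single_single (σ := (Rep.trivial ℤ PP ℤ).ρ) a g n
        (fun _ => (1 : ℤ))
      refine this.trans ?_
      change n • (1 : ℤ) = _
      simp [grLift]

lemma d_aug : matMap mOne ≫ aug = 0 := by
  refine Rep.free_ext _ _ _ _ _ fun i => ?_
  change (aug.hom ((matMap mOne).hom _) : ℤ) = 0
  rw [aug_apply, matMap_apply]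
  rw [Finset.sum_eq_single i (by intro c _ hc; rw [Finsupp.single_eq_of_ne hc]; simp) (by simp)]
  rw [Finsupp.single_eq_same, ← MonoidAlgebra.one_def, one_mul, mOne, map_sub, TT, grLift_of,
    ← map_one (MonoidAlgebra.of ℤ PP), grLift_of, sub_self]

lemma ex_aug (x : Unit →₀ RR) (h : (aug.hom x : ℤ) = 0) :
    ∃ y : Fin 3 →₀ RR, ((matMap mOne).hom y : Unit →₀ RR) = x := by
  rw [aug_apply] at h
  obtain ⟨y, hy⟩ := exact_zero _ h
  refine ⟨Finsupp.equivFunOnFinite.symm y, ?_⟩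
  refine Finsupp.ext fun u => ?_
  rw [matMap_apply, Fin.sum_univ_three]
  exact hy.symm

lemma ex_one (x : Fin 3 →₀ RR) (h : ((matMap mOne).hom x : Unit →₀ RR) = 0) :
    ∃ y : Fin 3 →₀ RR, ((matMap mEven).hom y : Fin 3 →₀ RR) = x := by
  have h1 := DFunLike.congr_fun h ()
  rw [matMap_apply, Fin.sum_univ_three] at h1
  obtain ⟨p, q, r, h0, h1, h2⟩ := fox (fun i => x i) h1
  refine ⟨Finsupp.equivFunOnFinite.symm ![p, q, r], ?_⟩
  refine Finsupp.ext fun u => ?_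
  rw [matMap_apply, Fin.sum_univ_three]
  fin_cases u
  · simpa [mEven] using h0.symm
  · simpa [mEven, -neg_add_rev] using h1.symm
  · simpa [mEven, -neg_add_rev] using h2.symm

lemma ex_odd (x : Fin 3 →₀ RR) (h : ((matMap mOdd).hom x : Fin 3 →₀ RR) = 0) :
    ∃ y : Fin 3 →₀ RR, ((matMap mEven).hom y : Fin 3 →₀ RR) = x := by
  apply ex_one
  have h1 := DFunLike.congr_fun h 0
  rw [matMap_apply] at h1
  refine Finsupp.ext fun u => ?_
  rw [matMap_apply]
  refine Eq.trans ?_ h1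
  simp [Fin.sum_univ_three, mOne, mOdd]

lemma ex_even (x : Fin 3 →₀ RR) (h : ((matMap mEven).hom x : Fin 3 →₀ RR) = 0) :
    ∃ y : Fin 3 →₀ RR, ((matMap mOdd).hom y : Fin 3 →₀ RR) = x := by
  have h0 := DFunLike.congr_fun h 0
  have h1 := DFunLike.congr_fun h 1
  have h2 := DFunLike.congr_fun h 2
  rw [matMap_apply, Fin.sum_univ_three] at h0 h1 h2
  obtain ⟨a, b, c, e0, e1, e2⟩ := exact_even (x 0) (x 1) (x 2) (by simpa [mEven] using h0)
    (by simpa [mEven, -neg_add_rev] using h1) (by simpa [mEven, -neg_add_rev] using h2)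
  refine ⟨Finsupp.equivFunOnFinite.symm ![a, b, c], ?_⟩
  refine Finsupp.ext fun u => ?_
  rw [matMap_apply, Fin.sum_univ_three]
  fin_cases u
  · simpa [mOdd] using e0.symm
  · simpa [mOdd, mul_assoc] using e1.symm
  · simpa [mOdd, mul_assoc] using e2.symm

end Resolution

section ResolutionTwo
open CategoryTheory MonoidalCategory Representation

local notation "PP" => amalgamThreeZFourAlongZTwo
local notation "RR" => MonoidAlgebra ℤ amalgamThreeZFourAlongZTwo

lemma resC_d (n : ℕ) : resC.d (n + 1) n = resd n := ChainComplex.of_d _ _ _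

/-- the augmentation -/
noncomputable def resπ : resC ⟶ (ChainComplex.single₀ (Rep ℤ PP)).obj (Rep.trivial ℤ PP ℤ) :=
  (resC.toSingle₀Equiv _).symm ⟨aug, by
    rw [resC_d 0]; exact d_aug⟩

lemma exact_of_elements {k G : Type} [CommRing k] [Group G] (S : ShortComplex (Rep.{0} k G))
    (h : ∀ x : S.X₂, S.g.hom x = 0 → ∃ y : S.X₁, S.f.hom y = x) : S.Exact := by
  apply (forget₂ _ (ModuleCat.{0} k)).reflects_exact_of_faithful
  rw [ShortComplex.moduleCat_exact_iff]
  exact h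

lemma resC_exact (m : ℕ) : (resC.sc' (m + 2) (m + 1) m).Exact := by
  apply exact_of_elements
  change ∀ x : resX (m + 1), (resC.d (m + 1) m).hom x = 0 →
    ∃ y : resX (m + 2), (resC.d (m + 2) (m + 1)).hom y = x
  rw [resC_d, resC_d]
  cases m with
  | zero =>
    change ∀ x : Fin 3 →₀ RR, (matMap mOne).hom x = 0 → ∃ y : Fin 3 →₀ RR, (mPar 0).hom y = x
    rw [mPar_even (by simp)]
    exact ex_one
  | succ m =>
    change ∀ x : Fin 3 →₀ RR, (mPar m).hom x = 0 → ∃ y : Fin 3 →₀ RR, (mPar (m + 1)).hom y = x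
    by_cases h : Even m
    · rw [mPar_even h, mPar_odd (by simpa [Nat.even_add_one] using h)]
      exact ex_even
    · rw [mPar_odd h, mPar_even (by simpa [Nat.even_add_one] using h)]
      exact ex_odd

lemma resπ_f : resπ.f 0 = aug := by
  simp [resπ, ChainComplex.toSingle₀Equiv]
  rfl

lemma resπ_quasiIso : QuasiIso resπ where
  quasiIsoAt m := by
    cases m with
    | zero =>
      rw [ChainComplex.quasiIsoAt₀_iff, ShortComplex.quasiIso_iff_of_zeros' _ rfl rfl rfl]
      constructor
      · apply exact_of_elements
        change ∀ x : Unit →₀ RR, (resπ.f 0).hom x = 0 →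
          ∃ y : Fin 3 →₀ RR, (resC.d 1 0).hom y = x
        rw [resπ_f, resC_d]
        exact ex_aug
      · change Epi (resπ.f 0)
        rw [resπ_f]
        change Epi (Y := Rep.trivial ℤ PP ℤ) aug
        rw [Rep.epi_iff_surjective]
        intro x
        refine ⟨Finsupp.single () (MonoidAlgebra.single 1 x), ?_⟩
        refine (aug_apply _).trans ?_
        simp [grLift]
    | succ m =>
      rw [quasiIsoAt_iff_exactAt' (hL := ChainComplex.exactAt_succ_single_obj ..),
          HomologicalComplex.exactAt_iff' _ (m + 2) (m + 1) m (by simp) (by simp)]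
      exact resC_exact m

/-- the projective resolution -/
noncomputable def resP : ProjectiveResolution (Rep.trivial ℤ PP ℤ) where
  complex := resC
  projective n := by
    cases n with
    | zero => exact inferInstanceAs (Projective (Rep.free.{0, 0, 0} ℤ PP Unit))
    | succ n => exact inferInstanceAs (Projective (Rep.free.{0, 0, 0} ℤ PP (Fin 3)))
  π := resπ
  quasiIso := resπ_quasiIso

end ResolutionTwo

section Final
open CategoryTheory MonoidalCategory Representation

local notation "PP" => amalgamThreeZFourAlongZTwo
local notation "RR" => MonoidAlgebra ℤ amalgamThreeZFourAlongZTwo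

lemma grLift_one_eq (x : RR) :
    grLift (fun _ => (1 : ℤ)) x = MonoidAlgebra.lift ℤ ℤ PP (1 : PP →* ℤ) x := by
  refine gr_ext (f := (grLift (fun _ => (1 : ℤ))).toAddMonoidHom)
    (f' := (MonoidAlgebra.lift ℤ ℤ PP (1 : PP →* ℤ) : RR →+* ℤ).toAddMonoidHom) ?_ x
  intro g
  change grLift _ _ = MonoidAlgebra.lift ℤ ℤ PP (1 : PP →* ℤ) _
  rw [grLift_of, MonoidAlgebra.lift_of]
  rfl

lemma lift_TT (i : Fin 3) : MonoidAlgebra.lift ℤ ℤ PP (1 : PP →* ℤ) (TT i) = 1 := by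
  rw [TT, MonoidAlgebra.lift_of]
  rfl

lemma aug_mOne (a : Fin 3) (b : Unit) : grLift (fun _ => (1 : ℤ)) (mOne a b) = 0 := by
  rw [grLift_one_eq, mOne, map_sub, lift_TT, map_one, sub_self]

lemma aug_mOdd (a b : Fin 3) : grLift (fun _ => (1 : ℤ)) (mOdd a b) = 0 := by
  rw [grLift_one_eq]
  fin_cases a <;> fin_cases b <;> simp [mOdd, lift_TT]

lemma aug_mEven (a b : Fin 3) : grLift (fun _ => (1 : ℤ)) (mEven a b) =
    (![![4, 0, 0], ![2, -2, 0], ![2, 0, -2]] : Fin 3 → Fin 3 → ℤ) a b := by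
  rw [grLift_one_eq]
  fin_cases a <;> fin_cases b <;> simp [mEven, lift_TT, NN]

lemma kerQuot_equiv_of {R A B C T : Type} [CommRing R] [AddCommGroup A] [AddCommGroup B]
    [AddCommGroup C] [Module R A] [Module R B] [Module R C] [AddCommGroup T] (f : B →ₗ[R] C)
    (g : A →ₗ[R] B) (hf : ∀ x, f x = 0) (φ : B →+ T) (hφ : Function.Surjective φ)
    (h : ∀ x, φ x = 0 ↔ ∃ y, g y = x) :
    Nonempty ((↥(LinearMap.ker f) ⧸
      Submodule.comap (LinearMap.ker f).subtype (LinearMap.range g)) ≃+ T) := by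
  let ψ : ↥(LinearMap.ker f) →+ T := φ.comp (LinearMap.ker f).subtype.toAddMonoidHom
  have hψ : Function.Surjective ψ := by
    intro t
    obtain ⟨x, hx⟩ := hφ t
    exact ⟨⟨x, hf x⟩, hx⟩
  have hk : (Submodule.comap (LinearMap.ker f).subtype (LinearMap.range g)).toAddSubgroup
      = ψ.ker := by
    ext x
    exact (h x.1).symm
  exact ⟨(QuotientAddGroup.quotientAddEquivOfEq hk).trans
    (QuotientAddGroup.quotientKerEquivOfSurjective ψ hψ)⟩

/-- the coinvariants functor -/
noncomputable abbrev FF : Rep.{0} ℤ PP ⥤ ModuleCat.{0} ℤ :=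
  (Rep.coinvariantsTensor ℤ PP).obj (Rep.trivial ℤ PP ℤ)

/-- the complex of coinvariants -/
noncomputable abbrev KK : ChainComplex (ModuleCat.{0} ℤ) ℕ :=
  resP.complex.coinvariantsTensorObj (Rep.trivial ℤ PP ℤ)

lemma KK_d (n : ℕ) : KK.d (n + 1) n = FF.map (resd n) := by
  change FF.map (resC.d (n + 1) n) = _
  rw [resC_d]
  rfl

/-- identification of coinvariants -/
noncomputable def phi {α : Type} [DecidableEq α] :
    FF.obj (Rep.free ℤ PP α) ≃+ (α →₀ ℤ) :=
  (Rep.coinvariantsTensorFreeLEquiv (Rep.trivial ℤ PP ℤ) α).toAddEquiv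

lemma phi_map {α β : Type} [Fintype α] [Fintype β] [DecidableEq α] [DecidableEq β]
    (m : α → β → RR) (x : FF.obj (Rep.free ℤ PP α)) (b : β) :
    phi ((FF.map (matMap m)).hom x) b =
      ∑ a, phi x a * grLift (fun _ => (1 : ℤ)) (m a b) :=
  coinv_matMap m x b

lemma map_zero_of {α β : Type} [Fintype α] [Fintype β] [DecidableEq α] [DecidableEq β]
    (m : α → β → RR) (h : ∀ a b, grLift (fun _ => (1 : ℤ)) (m a b) = 0)
    (x : FF.obj (Rep.free ℤ PP α)) : (FF.map (matMap m)).hom x = 0 := by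
  apply phi.injective
  rw [map_zero]
  refine Finsupp.ext fun b => ?_
  rw [phi_map]
  simp [h]

lemma map_even_inj (x : FF.obj (Rep.free ℤ PP (Fin 3)))
    (h : (FF.map (matMap mEven)).hom x = 0) : x = 0 := by
  apply phi.injective
  rw [map_zero]
  have h' : ∀ b, ∑ a, phi x a * grLift (fun _ => (1 : ℤ)) (mEven a b) = 0 := by
    intro b
    rw [← phi_map, h, map_zero]
    rfl
  have h0 := h' 0
  have h1 := h' 1
  have h2 := h' 2
  simp [aug_mEven, Fin.sum_univ_three] at h0 h1 h2
  rw [h1, h2] at h0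
  refine Finsupp.ext fun b => ?_
  fin_cases b
  · simpa using h0
  · exact h1
  · exact h2

/-- the map identifying the cokernel -/
def cokMap : (Fin 3 →₀ ℤ) →+ ZMod 4 × ZMod 2 × ZMod 2 where
  toFun v := (((v 0 + v 1 + v 2 : ℤ) : ZMod 4), ((v 1 : ℤ) : ZMod 2), ((v 2 : ℤ) : ZMod 2))
  map_zero' := by simp
  map_add' v w := by
    refine Prod.ext ?_ (Prod.ext ?_ ?_)
    · simp; ring
    · simp
    · simp

lemma cokMap_surj : Function.Surjective cokMap := by
  rintro ⟨a, b, c⟩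
  obtain ⟨a, rfl⟩ := ZMod.intCast_surjective a
  obtain ⟨b, rfl⟩ := ZMod.intCast_surjective b
  obtain ⟨c, rfl⟩ := ZMod.intCast_surjective c
  refine ⟨Finsupp.equivFunOnFinite.symm ![a - b - c, b, c], ?_⟩
  simp [cokMap]
  ring

lemma cokMap_zero (x : FF.obj (Rep.free ℤ PP (Fin 3))) :
    cokMap (phi x) = 0 ↔
      ∃ y : FF.obj (Rep.free ℤ PP (Fin 3)), (FF.map (matMap mEven)).hom y = x := by
  constructor
  · intro h
    have h0 := congrArg Prod.fst h
    have h1 := congrArg (fun z => z.2.1) h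
    have h2 := congrArg (fun z => z.2.2) h
    change ((phi x 0 + phi x 1 + phi x 2 : ℤ) : ZMod 4) = 0 at h0
    change ((phi x 1 : ℤ) : ZMod 2) = 0 at h1
    change ((phi x 2 : ℤ) : ZMod 2) = 0 at h2
    rw [ZMod.intCast_zmod_eq_zero_iff_dvd] at h0 h1 h2
    obtain ⟨a, ha⟩ := h0
    obtain ⟨b, hb⟩ := h1
    obtain ⟨c, hc⟩ := h2
    refine ⟨phi.symm (Finsupp.equivFunOnFinite.symm ![a, -b, -c]), ?_⟩
    apply phi.injective
    refine Finsupp.ext fun u => ?_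
    rw [phi_map]
    push_cast at ha hb hc
    simp only [aug_mEven, Fin.sum_univ_three, AddEquiv.apply_symm_apply]
    fin_cases u <;> simp <;> linarith
  · rintro ⟨y, rfl⟩
    have h : ∀ b, phi ((FF.map (matMap mEven)).hom y) b = _ := phi_map mEven y
    simp only [aug_mEven, Fin.sum_univ_three] at h
    generalize phi ((FF.map (matMap mEven)).hom y) = w at h ⊢
    have h0 := h 0
    have h1 := h 1
    have h2 := h 2
    simp at h0 h1 h2
    refine Prod.ext ?_ (Prod.ext ?_ ?_)
    · change ((_ + _ + _ : ℤ) : ZMod 4) = 0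
      rw [h0, h1, h2, ZMod.intCast_zmod_eq_zero_iff_dvd]
      exact ⟨phi y 0, by push_cast; ring⟩
    · change ((_ : ℤ) : ZMod 2) = 0
      rw [h1, ZMod.intCast_zmod_eq_zero_iff_dvd]
      exact ⟨- phi y 1, by push_cast; ring⟩
    · change ((_ : ℤ) : ZMod 2) = 0
      rw [h2, ZMod.intCast_zmod_eq_zero_iff_dvd]
      exact ⟨- phi y 2, by push_cast; ring⟩

/-- comparison -/
lemma bar_equiv (n : ℕ) : Nonempty (barHomologySucc PP n ≃+ KK.homology (n + 1)) := by
  classical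
  exact ⟨(barHomologySuccEquiv PP n).trans
    (groupHomologyIso (Rep.trivial ℤ PP ℤ) (n + 1) resP).toLinearEquiv.toAddEquiv⟩

lemma KK_even (n : ℕ) (hn : Even n) :
    Nonempty (KK.homology (n + 1) ≃+ ZMod 4 × ZMod 2 × ZMod 2) := by
  suffices h : Nonempty ((↥(LinearMap.ker (KK.d (n + 1) n).hom) ⧸
      Submodule.comap (LinearMap.ker (KK.d (n + 1) n).hom).subtype
        (LinearMap.range (KK.d (n + 2) (n + 1)).hom)) ≃+ ZMod 4 × ZMod 2 × ZMod 2) from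
    ⟨(homologySuccEquiv KK n).toAddEquiv.trans h.some⟩
  refine kerQuot_equiv_of _ _ ?_ (cokMap.comp (phi (α := Fin 3)).toAddMonoidHom) ?_ ?_
  · rw [KK_d]
    cases n with
    | zero => exact map_zero_of mOne aug_mOne
    | succ n =>
      change ∀ x, (FF.map (mPar n)).hom x = 0
      rw [mPar_odd (by simpa [Nat.even_add_one] using hn)]
      exact map_zero_of mOdd aug_mOdd
  · exact cokMap_surj.comp phi.surjective
  · rw [KK_d]
    change ∀ x, cokMap (phi x) = 0 ↔ ∃ y, (FF.map (mPar n)).hom y = x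
    rw [mPar_even hn]
    exact cokMap_zero

lemma KK_odd (n : ℕ) (hn : ¬ Even n) : Subsingleton (KK.homology (n + 1)) := by
  have hk : LinearMap.ker (KK.d (n + 1) n).hom = ⊥ := by
    rw [LinearMap.ker_eq_bot']
    rw [KK_d]
    cases n with
    | zero => simp at hn
    | succ n =>
      change ∀ x, (FF.map (mPar n)).hom x = 0 → x = 0
      rw [mPar_even (by simpa [Nat.even_add_one] using hn)]
      exact map_even_inj
  have : Subsingleton ↥(LinearMap.ker (KK.d (n + 1) n).hom) := by
    rw [hk]; infer_instance
  exact (homologySuccEquiv KK n).toEquiv.subsingleton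

end Final

/-- For `P` the amalgamated product of three copies of `ℤ/4` along `ℤ/2`, the
group homology `Hᵢ(P; ℤ)` is `ℤ/4 ⊕ ℤ/2 ⊕ ℤ/2` for odd `i > 0` and vanishes
for even `i > 0`; in particular the abelianization of `P` is
`ℤ/4 ⊕ ℤ/2 ⊕ ℤ/2`. -/
theorem homology_of_amalgam_three_ZFour_along_ZTwo (i : ℕ) (hi : 0 < i) :
    (Odd i → Nonempty
      (barHomologySucc amalgamThreeZFourAlongZTwo (i - 1) ≃+
        (ZMod 4 × ZMod 2 × ZMod 2))) ∧
    (Even i → Subsingleton (barHomologySucc amalgamThreeZFourAlongZTwo (i - 1))) ∧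
    Nonempty
      (Abelianization amalgamThreeZFourAlongZTwo ≃*
        Multiplicative (ZMod 4 × ZMod 2 × ZMod 2)) := by

  obtain ⟨n, rfl⟩ : ∃ n, i = n + 1 := ⟨i - 1, by omega⟩
  rw [Nat.add_sub_cancel]
  obtain ⟨e⟩ := bar_equiv n
  refine ⟨fun h => ?_, fun h => ?_, abelianization_equiv⟩
  · obtain ⟨e'⟩ := KK_even n (by
      rcases Nat.even_or_odd n with h' | h'
      · exact h'
      · exact absurd h (by simpa [Nat.odd_add_one, Nat.even_add_one] using h'))
    exact ⟨e.trans e'⟩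
  · have := KK_odd n (by simpa [Nat.even_add_one] using h)
    exact e.toEquiv.subsingleton
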